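/- For every integer r ≥ 1 and every subset W ⊆ V(G_r) with |W| ≤ 3r² (i.e. |W| ≤ |V(G_r)|/2), the number of edges of the finite hexagonal grid G_r with exactly one endpoint in W satisfies |ℰ_{G_r}(W)| ≥ (√6 − √3) · √|W|. -/

import Mathlib

/-- Adjacency of the infinite hexagonal grid `G∞` in brick-wall coordinates on `ℤ × ℤ`:
`(x,y)` and `(x',y')` are adjacent iff `y' = y` and `|x' - x| = 1`, or
`x' = x` and `|y' - y| = 1` and `x + min y y'` is even. -/
def hexAdj (v w : ℤ × ℤ) : Prop :=
  (v.2 = w.2 ∧ (v.1 - w.1).natAbs = 1) ∨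
  (v.1 = w.1 ∧ (v.2 - w.2).natAbs = 1 ∧ Even (v.1 + min v.2 w.2))

/-- The neighborhood `𝒩(W)`: vertices not in `W` adjacent to some vertex of `W`. -/
def hexNbhd (W : Set (ℤ × ℤ)) : Set (ℤ × ℤ) :=
  {v | v ∉ W ∧ ∃ w ∈ W, hexAdj v w}

/-- The boundary `ℬ(W)`: vertices of `W` adjacent to some vertex not in `W`. -/
def hexBdry (W : Set (ℤ × ℤ)) : Set (ℤ × ℤ) :=
  {v | v ∈ W ∧ ∃ w, w ∉ W ∧ hexAdj v w}

/-- The outgoing edges `ℰ(W)`, encoded as ordered pairs `(v, w)` with `v ∈ W`, `w ∉ W`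
and `v` adjacent to `w`; each edge with exactly one endpoint in `W` corresponds to
exactly one such pair. -/
def hexCutEdges (W : Set (ℤ × ℤ)) : Set ((ℤ × ℤ) × (ℤ × ℤ)) :=
  {p | p.1 ∈ W ∧ p.2 ∉ W ∧ hexAdj p.1 p.2}

/-- The hexagonal cell `C(a,b)`, with vertex set `{(2a+b+i, b+j) : i ∈ {0,1,2}, j ∈ {0,1}}`. -/
def hexCell (a b : ℤ) : Set (ℤ × ℤ) :=
  {(2*a+b, b), (2*a+b+1, b), (2*a+b+2, b),
   (2*a+b, b+1), (2*a+b+1, b+1), (2*a+b+2, b+1)}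

/-- The vertex set `V(G_r)` of the finite hexagonal grid of radius `r`: the union of the
cells `C(a,b)` with `(|a| + |b| + |a+b|)/2 ≤ r - 1`. -/
def gridVerts (r : ℕ) : Set (ℤ × ℤ) :=
  {v | ∃ a b : ℤ, a.natAbs + b.natAbs + (a+b).natAbs ≤ 2*(r-1) ∧ v ∈ hexCell a b}

/-- `𝒩_{G_r}(W)`: vertices of `V(G_r) \ W` adjacent to some vertex of `W`. -/
def hexNbhdIn (r : ℕ) (W : Set (ℤ × ℤ)) : Set (ℤ × ℤ) :=
  {v | v ∈ gridVerts r ∧ v ∉ W ∧ ∃ w ∈ W, hexAdj v w}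

/-- `ℬ_{G_r}(W)`: vertices of `W` adjacent to some vertex of `V(G_r) \ W`. -/
def hexBdryIn (r : ℕ) (W : Set (ℤ × ℤ)) : Set (ℤ × ℤ) :=
  {v | v ∈ W ∧ ∃ w, w ∈ gridVerts r ∧ w ∉ W ∧ hexAdj v w}

/-- `ℰ_{G_r}(W)`: the edges of `G_r` with exactly one endpoint in `W ⊆ V(G_r)`, encoded
as ordered pairs `(v, w)` with `v ∈ W`, `w ∈ V(G_r) \ W`, `v` adjacent to `w`. -/
def hexCutEdgesIn (r : ℕ) (W : Set (ℤ × ℤ)) : Set ((ℤ × ℤ) × (ℤ × ℤ)) :=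
  {p | p.1 ∈ W ∧ p.2 ∈ gridVerts r ∧ p.2 ∉ W ∧ hexAdj p.1 p.2}

/-- The index `ind_i(x,y)` of the direction-`i` row containing `(x,y)`
(directions numbered `0, 1, 2` for the paper's `1, 2, 3`):
`ind_1 = y`, `ind_2 = ⌊(y-x)/2⌋`, `ind_3 = ⌊(x+y)/2⌋`. -/
def rowInd : Fin 3 → ℤ × ℤ → ℤ
  | 0, v => v.2
  | 1, v => Int.fdiv (v.2 - v.1) 2
  | 2, v => Int.fdiv (v.1 + v.2) 2

/-- The linear parameter `p_i` along direction-`i` rows: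
`p_1 = x`, `p_2 = x + y`, `p_3 = x - y`. -/
def rowParam : Fin 3 → ℤ × ℤ → ℤ
  | 0, v => v.1
  | 1, v => v.1 + v.2
  | 2, v => v.1 - v.2

/-- A set of integers is consecutive if it contains every integer between any two of
its elements. -/
def ConsecutiveSet (S : Set ℤ) : Prop :=
  ∀ a ∈ S, ∀ b ∈ S, ∀ k : ℤ, a ≤ k → k ≤ b → k ∈ S

/-- `v` is an outermost neighbor of `W` for direction `i`: the direction-`i` row of `v`
is gray, and the parameter of `v` is `m - 1` or `M + 1`, where `m` and `M` are the
minimum and maximum of the parameter over `W` intersected with that row. -/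
def IsOutermostNeighbor (W : Set (ℤ × ℤ)) (i : Fin 3) (v : ℤ × ℤ) : Prop :=
  (rowParam i v + 1 ∈ rowParam i '' {w ∈ W | rowInd i w = rowInd i v} ∧
    ∀ q ∈ rowParam i '' {w ∈ W | rowInd i w = rowInd i v}, rowParam i v + 1 ≤ q) ∨
  (rowParam i v - 1 ∈ rowParam i '' {w ∈ W | rowInd i w = rowInd i v} ∧
    ∀ q ∈ rowParam i '' {w ∈ W | rowInd i w = rowInd i v}, q ≤ rowParam i v - 1)

/-!
`G_r` has `2r` rows in each of three directions, and every edge lies in two rows. A row meeting both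
`W` and its complement contains a cut edge, so there are at most `2K` such mixed rows, where `K` is
the number of cut edges.

Two rows of different directions share at most two vertices, hence `|W| ≤ 2 x_i x_j` for `i ≠ j`,
where `x_i` is the number of rows of direction `i` meeting `W`. If `W` meets every row, then all
rows meeting the complement are mixed, and this bound, applied to the complement, suffices; likewise
if the complement meets every row. Otherwise some row misses `W` and some row lies inside `W`. Such
rows are disjoint, so if their directions `i ≠ j` differ, both lie far from the centre, and there
are at most `r` rows of direction `i` missing `W` and of direction `j` inside `W` altogether; this
forces many mixed rows. In every case `9 |W| ≤ 16 K²`, that is `K ≥ (3/4) √|W|`, and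
`√6 - √3 < 3/4`.
-/

section

open Finset

/-! ### Row coordinates -/

/-- The three row indices of a vertex, normalised to `(ind₁, -ind₂, 1 - ind₃)`. With these signs
and shifts the three directions play symmetric roles: the vertices of `G∞` become the integer
triples with sum `1` or `2`, and `V(G_r)` becomes the triples with all entries in `[1 - r, r]`. -/
def hexCoord (v : ℤ × ℤ) : Fin 3 → ℤ := ![rowInd 0 v, -rowInd 1 v, 1 - rowInd 2 v]

theorem hexCoord_eq (v : ℤ × ℤ) :
    hexCoord v = ![v.2, -((v.2 - v.1) / 2), 1 - (v.1 + v.2) / 2] := by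
  simp [hexCoord, rowInd, Int.fdiv_eq_ediv_of_nonneg]

theorem sum_hexCoord (v : ℤ × ℤ) : ∑ i, hexCoord v i = 1 ∨ ∑ i, hexCoord v i = 2 := by
  simp only [hexCoord_eq, Fin.sum_univ_three, Matrix.cons_val]
  omega

theorem hexCoord_injective : Function.Injective hexCoord := fun v w h ↦ by
  simp only [hexCoord_eq, Matrix.vecCons_inj] at h
  ext <;> omega

theorem exists_hexCoord_eq {c : Fin 3 → ℤ} (hc : ∑ i, c i = 1 ∨ ∑ i, c i = 2) :
    ∃ v, hexCoord v = c := by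
  rw [Fin.sum_univ_three] at hc
  refine ⟨(c 1 + 1 - c 2, c 0), ?_⟩
  ext i
  fin_cases i <;> simp [hexCoord_eq] <;> omega

theorem eq_of_hexCoord_eq_of_sum_eq {v w : ℤ × ℤ} {i j : Fin 3} (hij : i ≠ j)
    (hi : hexCoord v i = hexCoord w i) (hj : hexCoord v j = hexCoord w j)
    (hsum : ∑ k, hexCoord v k = ∑ k, hexCoord w k) : v = w := by
  apply hexCoord_injective
  simp only [Fin.sum_univ_three] at hsum
  ext k
  fin_cases i <;> fin_cases j <;> fin_cases k <;> simp at hij hi hj ⊢ <;> omega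

theorem mem_hexCell_iff {a b : ℤ} {v : ℤ × ℤ} :
    v ∈ hexCell a b ↔ hexCoord v 0 - b ∈ Icc 0 1 ∧ hexCoord v 1 - a ∈ Icc 0 1 ∧
      hexCoord v 2 + (a + b) ∈ Icc 0 1 := by
  obtain ⟨x, y⟩ := v
  simp only [hexCell, hexCoord_eq, Matrix.cons_val, Set.mem_insert_iff, Set.mem_singleton_iff,
    Prod.mk.injEq, mem_Icc]
  omega

/-! ### The finite grid -/

/-- The vertex set `V(G_r)` as a finset, described by its row coordinates. -/
noncomputable def hexGrid (r : ℕ) : Finset (ℤ × ℤ) :=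
  (Fintype.piFinset fun _ : Fin 3 ↦ Icc (1 - r : ℤ) r).preimage hexCoord hexCoord_injective.injOn

theorem mem_hexGrid {r : ℕ} {v : ℤ × ℤ} :
    v ∈ hexGrid r ↔ ∀ i, hexCoord v i ∈ Icc (1 - r : ℤ) r := by
  simp [hexGrid]

theorem mem_hexGrid_of_mem_gridVerts {r : ℕ} (hr : 1 ≤ r) {v : ℤ × ℤ} (hv : v ∈ gridVerts r) :
    v ∈ hexGrid r := by
  obtain ⟨a, b, hab, hcell⟩ := hv
  simp only [mem_hexCell_iff, mem_Icc] at hcell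
  refine mem_hexGrid.2 fun i ↦ mem_Icc.2 ?_
  fin_cases i <;> dsimp only [Fin.zero_eta, Fin.mk_one, Fin.reduceFinMk] <;> omega

theorem mem_gridVerts_of_mem_hexGrid {r : ℕ} {v : ℤ × ℤ} (hv : v ∈ hexGrid r) :
    v ∈ gridVerts r := by
  have hsum := sum_hexCoord v
  have h₀ := mem_Icc.1 (mem_hexGrid.1 hv 0)
  have h₁ := mem_Icc.1 (mem_hexGrid.1 hv 1)
  have h₂ := mem_Icc.1 (mem_hexGrid.1 hv 2)
  simp only [Fin.sum_univ_three] at hsum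
  simp only [gridVerts, Set.mem_ofPred_eq, mem_hexCell_iff, mem_Icc]
  generalize hexCoord v 0 = A at *
  generalize hexCoord v 1 = B at *
  generalize hexCoord v 2 = C at *
  -- The coordinates of the centre of a suitable cell arise by lowering a largest coordinate by `1`
  -- if the sum is `1`, and all coordinates but a smallest one if the sum is `2`.
  rcases hsum with hsum | hsum
  · by_cases hA : B ≤ A ∧ C ≤ A
    · exact ⟨B, A - 1, by omega⟩
    by_cases hB : A ≤ B ∧ C ≤ B
    · exact ⟨B - 1, A, by omega⟩
    · exact ⟨B, A, by omega⟩
  · by_cases hA : A ≤ B ∧ A ≤ C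
    · exact ⟨B - 1, A, by omega⟩
    by_cases hB : B ≤ A ∧ B ≤ C
    · exact ⟨B, A - 1, by omega⟩
    · exact ⟨B - 1, A - 1, by omega⟩

theorem coe_hexGrid {r : ℕ} (hr : 1 ≤ r) : (hexGrid r : Set (ℤ × ℤ)) = gridVerts r :=
  Set.Subset.antisymm (fun _ ↦ mem_gridVerts_of_mem_hexGrid)
    fun _ ↦ mem_hexGrid_of_mem_gridVerts hr

theorem exists_mem_hexGrid {r : ℕ} {i j : Fin 3} (hij : i ≠ j) {a b s : ℤ} (hs : s = 1 ∨ s = 2)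
    (ha : a ∈ Icc (1 - r : ℤ) r) (hb : b ∈ Icc (1 - r : ℤ) r)
    (hc : s - a - b ∈ Icc (1 - r : ℤ) r) :
    ∃ v ∈ hexGrid r, hexCoord v i = a ∧ hexCoord v j = b ∧ ∑ k, hexCoord v k = s := by
  let c : Fin 3 → ℤ := Function.update (Function.update (fun _ ↦ s - a - b) i a) j b
  have hcsum : ∑ k, c k = s := by
    fin_cases i <;> fin_cases j <;> simp [c, Fin.sum_univ_three] at hij ⊢ <;> ring
  obtain ⟨v, hv⟩ := exists_hexCoord_eq (c := c) (by rwa [hcsum])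
  refine ⟨v, mem_hexGrid.2 fun k ↦ ?_, by simp [hv, c, hij], by simp [hv, c], by rw [hv, hcsum]⟩
  rw [hv]
  by_cases hkj : k = j
  · simpa [c, hkj] using hb
  by_cases hki : k = i
  · simpa [c, hij, hki] using ha
  · simpa [c, hkj, hki] using hc

theorem exists_mem_hexGrid_of_add_mem {r : ℕ} {i j : Fin 3} (hij : i ≠ j) {a b : ℤ}
    (ha : a ∈ Icc (1 - r : ℤ) r) (hb : b ∈ Icc (1 - r : ℤ) r)
    (hab : a + b ∈ Icc (1 - r : ℤ) (r + 1)) :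
    ∃ v ∈ hexGrid r, hexCoord v i = a ∧ hexCoord v j = b := by
  have hra := mem_Icc.1 ha
  have hrb := mem_Icc.1 hb
  rw [mem_Icc] at hab
  obtain ⟨s, hs, hc⟩ : ∃ s : ℤ, (s = 1 ∨ s = 2) ∧ s - a - b ∈ Icc (1 - r : ℤ) r := by
    simp only [mem_Icc]
    rcases hab.2.eq_or_lt with hab' | hab'
    · exact ⟨2, by omega⟩
    · exact ⟨1, by omega⟩
  obtain ⟨v, hv, hvi, hvj, -⟩ := exists_mem_hexGrid hij hs ha hb hc
  exact ⟨v, hv, hvi, hvj⟩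

/-- The vertices of `V(G_r)` whose coordinate `i` is positive and whose next one is not. Three such
rhombi tile the grid. -/
noncomputable def hexRhombus (r : ℕ) (i : Fin 3) : Finset (ℤ × ℤ) :=
  {v ∈ hexGrid r | 0 < hexCoord v i ∧ hexCoord v (i + 1) ≤ 0}

theorem card_hexRhombus (r : ℕ) (i : Fin 3) : #(hexRhombus r i) = 2 * r ^ 2 := by
  have hi : i ≠ i + 1 := by simp
  have hcard : #(({1, 2} : Finset ℤ) ×ˢ Icc (1 : ℤ) r ×ˢ Icc (1 - r : ℤ) 0) = 2 * r ^ 2 := by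
    simp [sq]
  rw [← hcard]
  refine card_nbij (fun v ↦ (∑ k, hexCoord v k, hexCoord v i, hexCoord v (i + 1))) ?_ ?_ ?_
  · intro v hv
    have hsum := sum_hexCoord v
    simp only [hexRhombus, coe_filter, Set.mem_ofPred_eq, mem_hexGrid, mem_Icc] at hv
    have := hv.1 i
    have := hv.1 (i + 1)
    simp only [coe_product, Set.mem_prod, mem_coe, mem_insert, mem_singleton, mem_Icc]
    omega
  · rintro v - w - h
    simp only [Prod.mk.injEq] at h
    exact eq_of_hexCoord_eq_of_sum_eq hi h.2.1 h.2.2 h.1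
  · rintro ⟨s, a, b⟩ h
    simp only [coe_product, Set.mem_prod, mem_coe, mem_insert, mem_singleton, mem_Icc] at h
    obtain ⟨v, hv, rfl, rfl, rfl⟩ := exists_mem_hexGrid (r := r) hi (a := a) (b := b) h.1
      (mem_Icc.2 (by omega)) (mem_Icc.2 (by omega)) (mem_Icc.2 (by omega))
    exact ⟨v, by simpa [hexRhombus, hv] using by omega, rfl⟩

theorem card_hexGrid (r : ℕ) : #(hexGrid r) = 6 * r ^ 2 := by
  have hdisj : ((univ : Finset (Fin 3)) : Set (Fin 3)).PairwiseDisjoint (hexRhombus r) := by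
    rintro i - j - hij
    refine disjoint_filter.2 fun v _ hi hj ↦ ?_
    fin_cases i <;> fin_cases j <;> simp at hij hi hj <;> omega
  have hunion : univ.biUnion (hexRhombus r) = hexGrid r := by
    ext v
    have hsum := sum_hexCoord v
    simp only [Fin.sum_univ_three] at hsum
    simp [hexRhombus, Fin.exists_fin_succ]
    omega
  rw [← hunion, card_biUnion hdisj]
  simp only [card_hexRhombus, sum_const, card_univ, Fintype.card_fin, smul_eq_mul]
  ring

/-! ### Rows as paths -/

theorem eq_of_hexCoord_eq_of_rowParam_eq {v w : ℤ × ℤ} {i : Fin 3}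
    (hrow : hexCoord v i = hexCoord w i) (hparam : rowParam i v = rowParam i w) : v = w := by
  ext <;> fin_cases i <;> simp [hexCoord_eq, rowParam] at hrow hparam ⊢ <;> omega

theorem exists_hexCoord_eq_rowParam_eq (i : Fin 3) (k t : ℤ) :
    ∃ v, hexCoord v i = k ∧ rowParam i v = t := by
  fin_cases i
  · exact ⟨(t, k), by simp [hexCoord_eq, rowParam]⟩
  · exact ⟨(t - ((t + 1) / 2 - k), (t + 1) / 2 - k), by simp [hexCoord_eq, rowParam]; omega⟩
  · exact ⟨((t + 1) / 2 + 1 - k, (t + 1) / 2 + 1 - k - t), by simp [hexCoord_eq, rowParam]; omega⟩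

theorem hexAdj_of_natAbs_rowParam_sub_eq_one {v w : ℤ × ℤ} {i : Fin 3}
    (hrow : hexCoord v i = hexCoord w i) (hparam : (rowParam i v - rowParam i w).natAbs = 1) :
    hexAdj v w := by
  simp only [hexAdj, Int.even_iff]
  fin_cases i <;> simp [hexCoord_eq, rowParam] at hrow hparam <;> omega

theorem hexCoord_mem_uIcc {u v w : ℤ × ℤ} {i : Fin 3} (huv : hexCoord u i = hexCoord v i)
    (huw : hexCoord u i = hexCoord w i)
    (hparam : rowParam i u ∈ uIcc (rowParam i v) (rowParam i w)) (j : Fin 3) :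
    hexCoord u j ∈ uIcc (hexCoord v j) (hexCoord w j) := by
  rw [mem_uIcc] at *
  fin_cases i <;> fin_cases j <;> simp [hexCoord_eq, rowParam] at huv huw hparam ⊢ <;> omega

theorem mem_hexGrid_of_rowParam_mem_uIcc {r : ℕ} {u v w : ℤ × ℤ} {i : Fin 3}
    (hv : v ∈ hexGrid r) (hw : w ∈ hexGrid r) (huv : hexCoord u i = hexCoord v i)
    (huw : hexCoord u i = hexCoord w i)
    (hparam : rowParam i u ∈ uIcc (rowParam i v) (rowParam i w)) : u ∈ hexGrid r :=
  mem_hexGrid.2 fun j ↦ uIcc_subset_Icc (mem_hexGrid.1 hv j) (mem_hexGrid.1 hw j)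
    (hexCoord_mem_uIcc huv huw hparam j)

theorem exists_hexAdj_mem_hexGrid_toward {r : ℕ} {v w : ℤ × ℤ} {i : Fin 3} (hv : v ∈ hexGrid r)
    (hw : w ∈ hexGrid r) (hrow : hexCoord v i = hexCoord w i) (hne : v ≠ w) :
    ∃ u ∈ hexGrid r, hexAdj v u ∧ hexCoord u i = hexCoord v i ∧
      (rowParam i v - rowParam i w).natAbs = (rowParam i u - rowParam i w).natAbs + 1 := by
  have hparam : rowParam i v ≠ rowParam i w := fun h ↦
    hne (eq_of_hexCoord_eq_of_rowParam_eq hrow h)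
  obtain ⟨t, ht, hbetween, hdist⟩ : ∃ t, (rowParam i v - t).natAbs = 1 ∧
      t ∈ uIcc (rowParam i v) (rowParam i w) ∧
      (rowParam i v - rowParam i w).natAbs = (t - rowParam i w).natAbs + 1 := by
    simp only [mem_uIcc]
    rcases hparam.lt_or_gt with hlt | hgt
    · exact ⟨rowParam i v + 1, by omega⟩
    · exact ⟨rowParam i v - 1, by omega⟩
  obtain ⟨u, huv, rfl⟩ := exists_hexCoord_eq_rowParam_eq i (hexCoord v i) t
  exact ⟨u, mem_hexGrid_of_rowParam_mem_uIcc hv hw huv (huv.trans hrow) hbetween,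
    hexAdj_of_natAbs_rowParam_sub_eq_one huv.symm ht, huv, hdist⟩

instance : DecidableRel hexAdj := fun v w ↦ by unfold hexAdj; infer_instance

/-- The cut edges `ℰ_{G_r}(W)` as a finset, oriented from `W` to its complement. -/
noncomputable def hexCut (r : ℕ) (W : Finset (ℤ × ℤ)) : Finset ((ℤ × ℤ) × (ℤ × ℤ)) :=
  {p ∈ W ×ˢ (hexGrid r \ W) | hexAdj p.1 p.2}

theorem mem_hexCut {r : ℕ} {W : Finset (ℤ × ℤ)} {v w : ℤ × ℤ} :
    (v, w) ∈ hexCut r W ↔ v ∈ W ∧ w ∈ hexGrid r ∧ w ∉ W ∧ hexAdj v w := by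
  simp [hexCut, and_assoc]

theorem coe_hexCut {r : ℕ} (hr : 1 ≤ r) (W : Finset (ℤ × ℤ)) :
    (hexCut r W : Set ((ℤ × ℤ) × (ℤ × ℤ))) = hexCutEdgesIn r W := by
  ext ⟨v, w⟩
  simp [mem_hexCut, hexCutEdgesIn, ← coe_hexGrid hr]

theorem exists_mem_hexCut_of_mem_row {r : ℕ} {W : Finset (ℤ × ℤ)} {i : Fin 3} {v w : ℤ × ℤ}
    (hv : v ∈ hexGrid r) (hw : w ∈ hexGrid r) (hrow : hexCoord v i = hexCoord w i)
    (hvW : v ∈ W) (hwW : w ∉ W) :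
    ∃ p ∈ hexCut r W, hexCoord p.1 i = hexCoord w i ∧ hexCoord p.2 i = hexCoord w i := by
  induction hn : (rowParam i v - rowParam i w).natAbs generalizing v with
  | zero =>
    have hvw : v = w := eq_of_hexCoord_eq_of_rowParam_eq hrow (by omega)
    exact absurd (hvw ▸ hvW) hwW
  | succ n ih =>
    obtain ⟨u, hu, hadj, hurow, hdist⟩ :=
      exists_hexAdj_mem_hexGrid_toward hv hw hrow (ne_of_mem_of_not_mem hvW hwW)
    by_cases huW : u ∈ W
    · exact ih hu (hurow.trans hrow) huW (by omega)
    · exact ⟨(v, u), mem_hexCut.2 ⟨hvW, hu, huW, hadj⟩, hrow, hurow.trans hrow⟩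

/-! ### Counting rows -/

/-- The indices of the rows of direction `i` that meet `W`. -/
def hexRows (W : Finset (ℤ × ℤ)) (i : Fin 3) : Finset ℤ := W.image (hexCoord · i)

theorem hexRows_subset {r : ℕ} {W : Finset (ℤ × ℤ)} (hW : W ⊆ hexGrid r) (i : Fin 3) :
    hexRows W i ⊆ Icc (1 - r : ℤ) r :=
  image_subset_iff.2 fun _ hv ↦ mem_hexGrid.1 (hW hv) i

theorem hexRows_hexGrid (r : ℕ) (i : Fin 3) : hexRows (hexGrid r) i = Icc (1 - r : ℤ) r := by
  refine (hexRows_subset Subset.rfl i).antisymm fun k hk ↦ ?_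
  have hk' := mem_Icc.1 hk
  obtain ⟨v, hv, rfl, -⟩ := exists_mem_hexGrid_of_add_mem (i := i) (j := i + 1) (b := 0) (by simp)
    hk (mem_Icc.2 (by omega)) (mem_Icc.2 (by omega))
  exact mem_image_of_mem _ hv

theorem card_le_two_mul_card_hexRows_mul (W : Finset (ℤ × ℤ)) {i j : Fin 3} (hij : i ≠ j) :
    #W ≤ 2 * (#(hexRows W i) * #(hexRows W j)) := by
  calc #W ≤ #(({1, 2} : Finset ℤ) ×ˢ hexRows W i ×ˢ hexRows W j) := by
        refine card_le_card_of_injOn (fun v ↦ (∑ k, hexCoord v k, hexCoord v i, hexCoord v j))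
          (fun v hv ↦ ?_) fun v _ w _ h ↦ ?_
        · have hsum := sum_hexCoord v
          simp only [coe_product, Set.mem_prod, mem_coe, mem_insert, mem_singleton]
          exact ⟨hsum, mem_image_of_mem _ hv, mem_image_of_mem _ hv⟩
        · simp only [Prod.mk.injEq] at h
          exact eq_of_hexCoord_eq_of_sum_eq hij h.2.1 h.2.2 h.1
    _ = 2 * (#(hexRows W i) * #(hexRows W j)) := by simp

theorem card_Icc_one_sub (r : ℕ) : #(Icc (1 - r : ℤ) r) = 2 * r := by
  rw [Int.card_Icc]
  omega

theorem card_hexRows_le {r : ℕ} {W : Finset (ℤ × ℤ)} (hW : W ⊆ hexGrid r) (i : Fin 3) :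
    #(hexRows W i) ≤ 2 * r :=
  (card_le_card (hexRows_subset hW i)).trans_eq (card_Icc_one_sub r)

theorem card_hexRows_add_card_hexRows_sdiff {r : ℕ} {W : Finset (ℤ × ℤ)} (hW : W ⊆ hexGrid r)
    (i : Fin 3) : #(hexRows W i) + #(hexRows (hexGrid r \ W) i) =
      2 * r + #(hexRows W i ∩ hexRows (hexGrid r \ W) i) := by
  rw [← card_union_add_card_inter, hexRows, hexRows, ← image_union, union_sdiff_of_subset hW,
    ← hexRows, hexRows_hexGrid, card_Icc_one_sub]

theorem card_hexRows_inter_le {r : ℕ} {W : Finset (ℤ × ℤ)} (hW : W ⊆ hexGrid r) (i : Fin 3) :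
    #(hexRows W i ∩ hexRows (hexGrid r \ W) i) ≤
      #{p ∈ hexCut r W | hexCoord p.1 i = hexCoord p.2 i} := by
  refine card_le_card_of_surjOn (fun p ↦ hexCoord p.1 i) fun k hk ↦ ?_
  simp only [hexRows, coe_inter, coe_image, Set.mem_inter_iff, Set.mem_image, mem_coe,
    mem_sdiff] at hk
  obtain ⟨⟨v, hv, rfl⟩, w, ⟨hw, hwW⟩, hrow⟩ := hk
  obtain ⟨p, hp, h₁, h₂⟩ := exists_mem_hexCut_of_mem_row (hW hv) hw hrow.symm hv hwW
  exact ⟨p, by simp [hp, h₁, h₂], h₁.trans hrow⟩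

theorem card_filter_hexCoord_eq_le_two {v w : ℤ × ℤ} (hne : v ≠ w) :
    #{i | hexCoord v i = hexCoord w i} ≤ 2 := by
  obtain ⟨i, hi⟩ := Function.ne_iff.1 (hexCoord_injective.ne hne)
  exact Nat.le_of_lt_succ (card_lt_univ_of_notMem (x := i) (by simpa using hi))

/-- Every mixed row contains a cut edge, and every edge lies in at most two rows. -/
theorem sum_card_hexRows_inter_le {r : ℕ} {W : Finset (ℤ × ℤ)} (hW : W ⊆ hexGrid r) :
    ∑ i, #(hexRows W i ∩ hexRows (hexGrid r \ W) i) ≤ 2 * #(hexCut r W) := by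
  calc ∑ i, #(hexRows W i ∩ hexRows (hexGrid r \ W) i)
      ≤ ∑ i, #{p ∈ hexCut r W | hexCoord p.1 i = hexCoord p.2 i} :=
        sum_le_sum fun i _ ↦ card_hexRows_inter_le hW i
    _ = ∑ p ∈ hexCut r W, #{i | hexCoord p.1 i = hexCoord p.2 i} := by
        simp only [card_filter]
        exact sum_comm
    _ ≤ ∑ _p ∈ hexCut r W, 2 := by
        refine sum_le_sum fun p hp ↦ card_filter_hexCoord_eq_le_two ?_
        obtain ⟨hp₁, -, hp₂, -⟩ := mem_hexCut.1 hp
        exact ne_of_mem_of_not_mem hp₁ hp₂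
    _ = 2 * #(hexCut r W) := by simp [mul_comm]

theorem card_add_card_le_of_add_notMem {r : ℕ} {A B : Finset ℤ} (hA : A.Nonempty)
    (hB : B.Nonempty) (hAr : A ⊆ Icc (1 - r : ℤ) r) (hBr : B ⊆ Icc (1 - r : ℤ) r)
    (hsum : ∀ a ∈ A, ∀ b ∈ B, a + b ∉ Icc (1 - r : ℤ) (r + 1)) : #A + #B ≤ r := by
  have hcard (C : Finset ℤ) (hC : C.Nonempty) : (#C : ℤ) ≤ C.max' hC + 1 - C.min' hC := by
    have := card_le_card (show C ⊆ Icc (C.min' hC) (C.max' hC) from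
      fun c hc ↦ mem_Icc.2 ⟨C.min'_le c hc, C.le_max' c hc⟩)
    rw [Int.card_Icc] at this
    have := C.min'_le_max' hC
    omega
  have hAcard := hcard A hA
  have hBcard := hcard B hB
  have hAmin := A.min'_mem hA
  have hAmax := A.max'_mem hA
  have hBmin := B.min'_mem hB
  have hBmax := B.max'_mem hB
  have h₁ := hsum _ hAmin _ hBmin
  have h₂ := hsum _ hAmax _ hBmax
  have h₃ := hsum _ hAmin _ hBmax
  have h₁' := mem_Icc.1 (hAr hAmin)
  have h₂' := mem_Icc.1 (hAr hAmax)
  have h₃' := mem_Icc.1 (hBr hBmin)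
  have h₄' := mem_Icc.1 (hBr hBmax)
  simp only [mem_Icc] at h₁ h₂ h₃
  omega

/-- An empty row and a full row of different directions have no common vertex. -/
theorem three_mul_le_card_hexRows_add {r : ℕ} {W : Finset (ℤ × ℤ)} (hW : W ⊆ hexGrid r)
    {i j : Fin 3} (hij : i ≠ j) (hi : #(hexRows W i) ≠ 2 * r)
    (hj : #(hexRows (hexGrid r \ W) j) ≠ 2 * r) :
    3 * r ≤ #(hexRows W i) + #(hexRows (hexGrid r \ W) j) := by
  have hmissed {U : Finset (ℤ × ℤ)} (hU : U ⊆ hexGrid r) (l : Fin 3) :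
      #(Icc (1 - r : ℤ) r \ hexRows U l) = 2 * r - #(hexRows U l) := by
    rw [card_sdiff_of_subset (hexRows_subset hU l), card_Icc_one_sub]
  have hcompl : hexGrid r \ W ⊆ hexGrid r := sdiff_subset
  have hile := card_hexRows_le hW i
  have hjle := card_hexRows_le hcompl j
  have hmiss_i := hmissed hW i
  have hmiss_j := hmissed hcompl j
  suffices ∀ a ∈ Icc (1 - r : ℤ) r \ hexRows W i,
      ∀ b ∈ Icc (1 - r : ℤ) r \ hexRows (hexGrid r \ W) j, a + b ∉ Icc (1 - r : ℤ) (r + 1) by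
    have := card_add_card_le_of_add_notMem (card_pos.1 (by omega)) (card_pos.1 (by omega))
      sdiff_subset sdiff_subset this
    omega
  intro a ha b hb hab
  obtain ⟨ha, haW⟩ := mem_sdiff.1 ha
  obtain ⟨hb, hbW⟩ := mem_sdiff.1 hb
  obtain ⟨v, hv, rfl, rfl⟩ : ∃ v ∈ hexGrid r, hexCoord v i = a ∧ hexCoord v j = b :=
    exists_mem_hexGrid_of_add_mem hij ha hb hab
  by_cases hvW : v ∈ W
  · exact haW (mem_image_of_mem _ hvW)
  · exact hbW (mem_image_of_mem _ (mem_sdiff.2 ⟨hv, hvW⟩))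

/-! ### The numerical inequality -/

theorem sum_fin_three_eq {M : Type*} [AddCommMonoid M] (f : Fin 3 → M) (i : Fin 3) :
    ∑ j, f j = f i + f (i + 1) + f (i + 2) := by
  rw [← Equiv.sum_comp (Equiv.addLeft i)]
  simp [Fin.sum_univ_three]

theorem nine_mul_le_of_balanced {N K : ℕ} {x : Fin 3 → ℕ}
    (hN : ∀ i j, i ≠ j → N ≤ 2 * (x i * x j)) (hK : ∑ i, x i ≤ 2 * K) : 9 * N ≤ 8 * K ^ 2 := by
  rw [Fin.sum_univ_three] at hK
  have h₀₁ := hN 0 1 (by decide)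
  have h₁₂ := hN 1 2 (by decide)
  have h₂₀ := hN 2 0 (by decide)
  have hK' := Nat.pow_le_pow_left hK 2
  zify at *
  linarith [sq_nonneg ((x 0 : ℤ) - x 1), sq_nonneg ((x 1 : ℤ) - x 2), sq_nonneg ((x 2 : ℤ) - x 0)]

theorem nine_mul_le_of_narrow {N K r t : ℕ} (ht : t ≤ r) (hN : N ≤ 4 * (r * t))
    (hK : 2 * r + t ≤ 2 * K) : 9 * N ≤ 16 * K ^ 2 := by
  have hK' := Nat.pow_le_pow_left hK 2
  zify at *
  have hfactor : (0 : ℤ) ≤ (4 * r - t) * (r - t) := mul_nonneg (by omega) (by omega)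
  linarith

theorem eight_mul_add_le_sum {r : ℕ} {x y : Fin 3 → ℕ} (hy : ∀ i, y i ≤ 2 * r)
    (hxy : ∀ i, 2 * r ≤ x i + y i)
    (hcross : ∀ i j, i ≠ j → x i ≠ 2 * r → y j ≠ 2 * r → 3 * r ≤ x i + y j)
    (hfull : ∃ j, y j ≠ 2 * r) {i : Fin 3} (hi : x i < r) :
    8 * r + x i ≤ ∑ j, (x j + y j) := by
  have hyj (j : Fin 3) (hj : i ≠ j) : y j = 2 * r := by
    by_contra h
    have := hcross i j hj (by omega) h
    have := hy j
    omega
  have hyi : y i ≠ 2 * r := by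
    obtain ⟨j, hj⟩ := hfull
    by_cases hij : i = j
    · exact hij ▸ hj
    · exact absurd (hyj j hij) hj
  have hxj (j : Fin 3) (hj : i ≠ j) : 3 * r ≤ x j + y i := by
    by_cases h : x j = 2 * r
    · have := hxy i
      omega
    · exact hcross j i hj.symm h hyi
  have h₁ : i ≠ i + 1 := by simp
  have h₂ : i ≠ i + 2 := by simp
  have := hyj _ h₁
  have := hyj _ h₂
  have := hxj _ h₁
  have := hxj _ h₂
  have := hy i
  rw [sum_fin_three_eq _ i]
  omega

theorem nine_mul_le_of_thin_direction {r N K : ℕ} {x y : Fin 3 → ℕ} (hx : ∀ i, x i ≤ 2 * r)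
    (hy : ∀ i, y i ≤ 2 * r) (hxy : ∀ i, 2 * r ≤ x i + y i)
    (hN : ∀ i j, i ≠ j → N ≤ 2 * (x i * x j)) (hK : ∑ i, (x i + y i) ≤ 6 * r + 2 * K)
    (hcross : ∀ i j, i ≠ j → x i ≠ 2 * r → y j ≠ 2 * r → 3 * r ≤ x i + y j)
    (hfull : ∃ j, y j ≠ 2 * r) {i : Fin 3} (hi : x i < r) : 9 * N ≤ 16 * K ^ 2 := by
  have hsum := eight_mul_add_le_sum hy hxy hcross hfull hi
  refine nine_mul_le_of_narrow hi.le ?_ (by omega)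
  calc N ≤ 2 * (x i * x (i + 1)) := hN i (i + 1) (by simp)
    _ ≤ 2 * (x i * (2 * r)) := by gcongr; exact hx _
    _ = 4 * (r * x i) := by ring

theorem nine_mul_le_of_thick_directions {r N K : ℕ} {x y : Fin 3 → ℕ} (hNr : N ≤ 3 * r ^ 2)
    (hK : ∑ i, (x i + y i) ≤ 6 * r + 2 * K)
    (hcross : ∀ i j, i ≠ j → x i ≠ 2 * r → y j ≠ 2 * r → 3 * r ≤ x i + y j)
    (hx : ∀ i, r ≤ x i) (hy : ∀ i, r ≤ y i) : 9 * N ≤ 16 * K ^ 2 := by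
  have hpair (i j : Fin 3) (hij : i ≠ j) : 3 * r ≤ x i + y j := by
    have := hcross i j hij
    have := hx i
    have := hy j
    omega
  have h₀₁ := hpair 0 1 (by decide)
  have h₁₂ := hpair 1 2 (by decide)
  have h₂₀ := hpair 2 0 (by decide)
  rw [Fin.sum_univ_three] at hK
  have hK' : (3 * r) ^ 2 ≤ (2 * K) ^ 2 := Nat.pow_le_pow_left (by omega) 2
  linarith

/-- Here `N` and `M` are the sizes of a set and of its complement in `V(G_r)`, `x i` and `y i` count
the rows of direction `i` meeting them, and `K` is the number of cut edges. -/
theorem nine_mul_le_of_row_counts {r N M K : ℕ} {x y : Fin 3 → ℕ} (hNr : N ≤ 3 * r ^ 2)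
    (hNM : N ≤ M) (hx : ∀ i, x i ≤ 2 * r) (hy : ∀ i, y i ≤ 2 * r)
    (hxy : ∀ i, 2 * r ≤ x i + y i) (hN : ∀ i j, i ≠ j → N ≤ 2 * (x i * x j))
    (hM : ∀ i j, i ≠ j → M ≤ 2 * (y i * y j)) (hK : ∑ i, (x i + y i) ≤ 6 * r + 2 * K)
    (hcross : ∀ i j, i ≠ j → x i ≠ 2 * r → y j ≠ 2 * r → 3 * r ≤ x i + y j) :
    9 * N ≤ 16 * K ^ 2 := by
  have hcross' : ∀ i j, i ≠ j → y i ≠ 2 * r → x j ≠ 2 * r → 3 * r ≤ y i + x j :=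
    fun i j hij hi hj ↦ add_comm (x j) (y i) ▸ hcross j i hij.symm hj hi
  have hK' : ∑ i, (y i + x i) ≤ 6 * r + 2 * K := by simpa only [add_comm] using hK
  by_cases hx_full : ∀ i, x i = 2 * r
  · have := nine_mul_le_of_balanced (K := K) hM (by
      simp only [Fin.sum_univ_three, hx_full] at hK ⊢
      omega)
    linarith
  by_cases hy_full : ∀ i, y i = 2 * r
  · have := nine_mul_le_of_balanced (K := K) hN (by
      simp only [Fin.sum_univ_three, hy_full] at hK ⊢
      omega)
    linarith
  push Not at hx_full hy_full
  by_cases hx_thin : ∃ i, x i < r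
  · obtain ⟨i, hi⟩ := hx_thin
    exact nine_mul_le_of_thin_direction hx hy hxy hN hK hcross hy_full hi
  by_cases hy_thin : ∃ i, y i < r
  · obtain ⟨i, hi⟩ := hy_thin
    have := nine_mul_le_of_thin_direction hy hx (fun i ↦ add_comm (x i) (y i) ▸ hxy i) hM hK'
      hcross' hx_full hi
    linarith
  push Not at hx_thin hy_thin
  exact nine_mul_le_of_thick_directions hNr hK hcross hx_thin hy_thin

theorem nine_mul_card_le_sixteen_mul_card_hexCut_sq {r : ℕ} {W : Finset (ℤ × ℤ)}
    (hW : W ⊆ hexGrid r) (hcard : #W ≤ 3 * r ^ 2) : 9 * #W ≤ 16 * #(hexCut r W) ^ 2 := by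
  have hcompl : hexGrid r \ W ⊆ hexGrid r := sdiff_subset
  have hle : #W ≤ #(hexGrid r \ W) := by
    rw [card_sdiff_of_subset hW, card_hexGrid]
    omega
  have hsum : ∑ i, (#(hexRows W i) + #(hexRows (hexGrid r \ W) i)) ≤
      6 * r + 2 * #(hexCut r W) := by
    simp only [card_hexRows_add_card_hexRows_sdiff hW, sum_add_distrib, sum_const, card_univ,
      Fintype.card_fin, smul_eq_mul]
    linarith [sum_card_hexRows_inter_le hW]
  exact nine_mul_le_of_row_counts hcard hle (card_hexRows_le hW) (card_hexRows_le hcompl)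
    (fun i ↦ by rw [card_hexRows_add_card_hexRows_sdiff hW]; omega)
    (fun _ _ ↦ card_le_two_mul_card_hexRows_mul W)
    (fun _ _ ↦ card_le_two_mul_card_hexRows_mul _) hsum
    fun _ _ ↦ three_mul_le_card_hexRows_add hW

end

theorem sqrt_six_sub_sqrt_three_le : Real.sqrt 6 - Real.sqrt 3 ≤ 3 / 4 := by
  have h₆ : Real.sqrt 6 ≤ 49 / 20 := Real.sqrt_le_iff.2 (by norm_num)
  have h₃ : 17 / 10 ≤ Real.sqrt 3 := Real.le_sqrt_of_sq_le (by norm_num)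
  linarith

theorem finite_hex_edge_isoperimetric_general (r : ℕ) (hr : 1 ≤ r) (W : Set (ℤ × ℤ))
    (hWsub : W ⊆ gridVerts r) (hcard : W.ncard ≤ 3 * r ^ 2) :
    3 / 4 * Real.sqrt W.ncard ≤ ((hexCutEdgesIn r W).ncard : ℝ) := by
  rw [← coe_hexGrid hr] at hWsub
  lift W to Finset (ℤ × ℤ) using (hexGrid r).finite_toSet.subset hWsub
  rw [← coe_hexCut hr, Set.ncard_coe_finset]
  rw [Set.ncard_coe_finset] at hcard ⊢
  have hnat := nine_mul_card_le_sixteen_mul_card_hexCut_sq (Finset.coe_subset.1 hWsub) hcard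
  have hreal : (9 : ℝ) * W.card ≤ 16 * ((hexCut r W).card : ℝ) ^ 2 := by exact_mod_cast hnat
  have hsqrt : Real.sqrt W.card ≤ 4 / 3 * (hexCut r W).card :=
    Real.sqrt_le_iff.2 ⟨by positivity, by linarith⟩
  linarith

/-- For every `r ≥ 1` and every `W ⊆ V(G_r)` with `|W| ≤ 3r²`,
`|ℰ_{G_r}(W)| ≥ (√6 - √3) · √|W|`. -/
theorem finite_hex_edge_isoperimetric (r : ℕ) (hr : 1 ≤ r) (W : Set (ℤ × ℤ))
    (hWsub : W ⊆ gridVerts r) (hWfin : W.Finite) (hcard : W.ncard ≤ 3*r^2) :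
    (Real.sqrt 6 - Real.sqrt 3) * Real.sqrt W.ncard ≤ ((hexCutEdgesIn r W).ncard : ℝ) :=
  (mul_le_mul_of_nonneg_right sqrt_six_sub_sqrt_three_le (Real.sqrt_nonneg _)).trans
    (finite_hex_edge_isoperimetric_general r hr W hWsub hcard)
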